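/- arXiv:math/0610515 — 3 statements merged into one kernel-verified Lean document; each statement's English description precedes it below -/
import Mathlib

section
/- Let {S_k; k ≥ 1} be a nondecreasing sequence of positive random variables with μ > 0 such that sup_n E|S_n − nμ|/√n < ∞. Then max_{k ≥ k_0} |S_k/(kμ) − 1| converges to 0 in probability as k_0 → ∞, and consequently S_k/(kμ) → 1 almost surely as k → ∞. -/
open MeasureTheory Filter

/-- If `{S_k}` is a nondecreasing sequence of positive random variables, `μ > 0`, and
`sup_n E|S_n − nμ|/√n < ∞`, then `max_{k ≥ k₀} |S_k/(kμ) − 1| → 0` in probability as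
`k₀ → ∞`, and consequently `S_k/(kμ) → 1` almost surely. -/
theorem ratio_tendsto_one_in_probability_and_ae {Ω : Type*} [MeasurableSpace Ω]
    (P : Measure Ω) [IsProbabilityMeasure P] (S : ℕ → Ω → ℝ) (μ : ℝ) (hμ : 0 < μ)
    (hmeas : ∀ k, Measurable (S k))
    (hpos : ∀ (k : ℕ) (ω : Ω), 1 ≤ k → 0 < S k ω)
    (hmono : ∀ ω, Monotone fun k => S k ω)
    (hC : ∃ C₀ : ℝ, ∀ n : ℕ, 1 ≤ n → Integrable (S n) P ∧
      (∫ ω, |S n ω - (n : ℝ) * μ| ∂P) ≤ C₀ * Real.sqrt n) :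
    (∀ δ : ℝ, 0 < δ →
      Tendsto (fun k₀ : ℕ => P {ω | ∃ k : ℕ, k₀ ≤ k ∧ δ < |S k ω / ((k : ℝ) * μ) - 1|})
        atTop (nhds 0)) ∧
    (∀ᵐ ω ∂P, Tendsto (fun k : ℕ => S k ω / ((k : ℝ) * μ)) atTop (nhds 1)) := by
  obtain ⟨C, hC⟩ := hC
  have key : ∀ᵐ ω ∂P, Tendsto (fun k : ℕ => S k ω / ((k : ℝ) * μ)) atTop (nhds 1) := by
    let g : ℕ → Ω → ENNReal := fun n ω =>
      ENNReal.ofReal (|S ((n+1)^4) ω - (((n+1)^4 : ℕ) : ℝ) * μ| / (((n+1)^4 : ℕ) : ℝ))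
    have hg : ∀ n, Measurable (g n) := by
      intro n
      have := hmeas ((n+1)^4)
      simp only [g]
      fun_prop
    have hint : ∀ n, ∫⁻ ω, g n ω ∂P ≤ ENNReal.ofReal (C * (1 / ((n+1 : ℕ) : ℝ)^2)) := by
      intro n
      obtain ⟨h1, h2⟩ := hC ((n+1)^4) (Nat.one_le_pow _ _ (by omega))
      have h3 : Integrable (fun ω => |S ((n+1)^4) ω - (((n+1)^4 : ℕ) : ℝ) * μ| /
          (((n+1)^4 : ℕ) : ℝ)) P := ((h1.sub (integrable_const _)).abs).div_const _
      simp only [g]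
      rw [← ofReal_integral_eq_lintegral_ofReal h3 (ae_of_all _ fun ω => by positivity)]
      apply ENNReal.ofReal_le_ofReal
      rw [integral_div]
      have hs : Real.sqrt (((n+1)^4 : ℕ) : ℝ) = ((n+1 : ℕ) : ℝ)^2 := by
        rw [show (((n+1)^4 : ℕ) : ℝ) = (((n+1 : ℕ) : ℝ)^2)^2 by push_cast; ring]
        exact Real.sqrt_sq (by positivity)
      rw [hs] at h2
      rw [div_le_iff₀ (by positivity)]
      refine h2.trans (le_of_eq ?_)
      push_cast
      field_simp
    have hsum : Summable (fun n : ℕ => C * (1 / ((n+1 : ℕ) : ℝ)^2)) := by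
      apply Summable.mul_left
      exact (summable_nat_add_iff 1).2 (Real.summable_one_div_nat_pow.2 (by norm_num : 1 < 2))
    have hfin : ∫⁻ ω, ∑' n, g n ω ∂P ≠ ⊤ := by
      rw [lintegral_tsum fun n => (hg n).aemeasurable]
      exact ne_top_of_le_ne_top hsum.tsum_ofReal_ne_top (ENNReal.tsum_le_tsum hint)
    have hae := ae_lt_top' (AEMeasurable.tsum fun n => (hg n).aemeasurable) hfin
    filter_upwards [hae] with ω hω
    have h0 := ENNReal.tendsto_atTop_zero_of_tsum_ne_top hω.ne
    have h1 : Tendsto (fun n : ℕ => |S ((n+1)^4) ω - (((n+1)^4 : ℕ) : ℝ) * μ| /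
        (((n+1)^4 : ℕ) : ℝ)) atTop (nhds 0) := by
      have := (ENNReal.tendsto_toReal ENNReal.zero_ne_top).comp h0
      refine this.congr fun n => ?_
      simp only [g, Function.comp]
      rw [ENNReal.toReal_ofReal (by positivity)]
    have h2 : Tendsto (fun n : ℕ => S ((n+1)^4) ω / (((n+1)^4 : ℕ) : ℝ)) atTop (nhds μ) := by
      rw [tendsto_iff_norm_sub_tendsto_zero]
      refine h1.congr fun n => ?_
      have hp : (0:ℝ) < (((n+1)^4 : ℕ) : ℝ) := by positivity
      rw [Real.norm_eq_abs, ← abs_of_pos hp, ← abs_div, abs_of_pos hp]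
      congr 1
      field_simp
    have hr : Tendsto (fun n : ℕ => (1 + 1 / ((n:ℝ) + 1))^4) atTop (nhds 1) := by
      simpa using ((tendsto_one_div_add_atTop_nhds_zero_nat (𝕜 := ℝ)).const_add 1).pow 4
    have h3 : Tendsto (fun n : ℕ => S n ω / n) atTop (nhds μ) := by
      apply tendsto_div_of_monotone_of_exists_subseq_tendsto_div _ _ (hmono ω)
      intro a ha
      refine ⟨fun n => (n+1)^4, ?_, ?_, h2⟩
      · filter_upwards [hr.eventually (gt_mem_nhds ha)] with n hn
        have hp : (0:ℝ) < (n:ℝ) + 1 := by positivity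
        calc (((n+1+1)^4 : ℕ) : ℝ) = (1 + 1 / ((n:ℝ) + 1))^4 * (((n+1)^4 : ℕ) : ℝ) := by
              push_cast
              rw [← mul_pow]
              congr 1
              field_simp
          _ ≤ a * (((n+1)^4 : ℕ) : ℝ) := by gcongr
      · exact (tendsto_pow_atTop (by norm_num)).comp (tendsto_add_atTop_nat 1)
    have h4 := h3.div_const μ
    rw [div_self hμ.ne'] at h4
    exact h4.congr fun n => by rw [div_div]
  refine ⟨fun δ hδ => ?_, key⟩
  have hA : ∀ k₀ : ℕ, MeasurableSet {ω | ∃ k : ℕ, k₀ ≤ k ∧ δ < |S k ω / ((k : ℝ) * μ) - 1|} := by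
    intro k₀
    have : {ω | ∃ k : ℕ, k₀ ≤ k ∧ δ < |S k ω / ((k : ℝ) * μ) - 1|} =
        ⋃ k : ℕ, ⋃ _ : k₀ ≤ k, {ω | δ < |S k ω / ((k : ℝ) * μ) - 1|} := by
      ext ω; simp
    rw [this]
    refine MeasurableSet.iUnion fun k => MeasurableSet.iUnion fun _ => ?_
    have := hmeas k
    exact measurableSet_lt measurable_const (by fun_prop)
  have hlim := tendsto_measure_iInter_atTop (μ := P) (fun k₀ => (hA k₀).nullMeasurableSet)
    (fun i j hij ω ⟨k, hk, h⟩ => ⟨k, hij.trans hk, h⟩) ⟨0, measure_ne_top _ _⟩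
  suffices hz : P (⋂ k₀ : ℕ, {ω | ∃ k : ℕ, k₀ ≤ k ∧ δ < |S k ω / ((k : ℝ) * μ) - 1|}) = 0 by
    rw [hz] at hlim
    exact hlim
  refine measure_mono_null ?_ (ae_iff.1 key)
  intro ω hω ht
  obtain ⟨N, hN⟩ := Metric.tendsto_atTop.1 ht δ hδ
  obtain ⟨k, hk, h⟩ := Set.mem_iInter.1 hω N
  have := hN k hk
  rw [Real.dist_eq] at this
  exact lt_asymm h this
end

section
/- Let F be the set of all absolutely continuous functions f on [0,1] with f(0) = 0 and ∫_0^1 (f′(u))^2 du ≤ 1. Then for every f ∈ F and every t ∈ (0,1], one has ∫_0^t (f(u)/u) du ≤ √(2t); in particular, sup_{f ∈ F} sup_{0 ≤ t ≤ 1} ∫_0^t (f(u)/u) du ≤ √2. -/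
open MeasureTheory

/-- The Strassen set: all functions `f` on `[0,1]` with `f(0) = 0` that are absolutely
continuous with a derivative `g` lying in the unit ball of `L²[0,1]`, i.e.
`f t = ∫_0^t g(u) du` for `t ∈ [0,1]` and `∫_0^1 g(u)² du ≤ 1`. -/
def StrassenSet : Set (ℝ → ℝ) :=
  {f | ∃ g : ℝ → ℝ, IntegrableOn g (Set.Icc 0 1) volume ∧
    IntegrableOn (fun u => (g u) ^ 2) (Set.Icc 0 1) volume ∧
    (∫ u in Set.Icc (0:ℝ) 1, (g u) ^ 2) ≤ 1 ∧
    ∀ t ∈ Set.Icc (0:ℝ) 1, f t = ∫ u in Set.Ioc (0:ℝ) t, g u}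

/-- Integrability and value of the squared logarithmic kernel. -/
lemma log_sq_aux (t : ℝ) (ht : 0 < t) :
    IntegrableOn (fun s => (Real.log t - Real.log s) ^ 2) (Set.Ioc 0 t) volume ∧
    ∫ s in Set.Ioc 0 t, (Real.log t - Real.log s) ^ 2 = 2 * t := by
  set G : ℝ → ℝ := fun s => s * ((Real.log t - Real.log s) ^ 2 +
    2 * (Real.log t - Real.log s) + 2) with hG
  have hc : ContinuousOn G (Set.Icc 0 t) := by
    have h1 : Continuous (fun s : ℝ => √s * Real.log √s) :=
      Real.continuous_mul_log.comp Real.continuous_sqrt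
    have h2 := Real.continuous_mul_log
    have h3 : Continuous (fun s : ℝ => (√s * Real.log t - 2 * (√s * Real.log √s)) ^ 2
        + 2 * (s * Real.log t - s * Real.log s) + 2 * s) := by fun_prop
    refine h3.continuousOn.congr ?_
    intro s hs
    have h4 : √s ^ 2 = s := Real.sq_sqrt hs.1
    have h5 : Real.log √s = Real.log s / 2 := Real.log_sqrt hs.1
    simp only [hG, h5]
    linear_combination (-(Real.log t - Real.log s) ^ 2) * h4
  have hd : ∀ x ∈ Set.Ioo 0 t, HasDerivAt G ((Real.log t - Real.log x) ^ 2) x := by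
    intro x hx
    have hl := (Real.hasDerivAt_log hx.1.ne').const_sub (Real.log t)
    have := (hasDerivAt_id x).mul (((hl.pow 2).add (hl.const_mul 2)).add_const 2)
    refine this.congr_deriv ?_
    have := hx.1.ne'
    simp
    field_simp
    ring
  have hi := intervalIntegral.integrableOn_deriv_of_nonneg hc hd (fun x _ => sq_nonneg _)
  refine ⟨hi, ?_⟩
  rw [← intervalIntegral.integral_of_le ht.le,
    intervalIntegral.integral_eq_sub_of_hasDerivAt_of_le ht.le hc hd
      ((intervalIntegrable_iff_integrableOn_Ioc_of_le ht.le).2 hi)]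
  simp [hG]
  ring

lemma inner_aux (a s t : ℝ) (hs : 0 < s) (hst : s ≤ t) (ha : 0 ≤ a) :
    ∫⁻ u in Set.Icc s t, ENNReal.ofReal (a / u) =
      ENNReal.ofReal (a * (Real.log t - Real.log s)) := by
  have hI : IntegrableOn (fun u : ℝ => a / u) (Set.Icc s t) volume := by
    refine ContinuousOn.integrableOn_Icc ?_
    exact continuousOn_const.div continuousOn_id (fun x hx => (hs.trans_le hx.1).ne')
  rw [← ofReal_integral_eq_lintegral_ofReal hI]
  · rw [integral_Icc_eq_integral_Ioc, ← intervalIntegral.integral_of_le hst]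
    simp only [div_eq_mul_inv]
    rw [intervalIntegral.integral_const_mul, integral_inv_of_pos hs (hs.trans_le hst),
      Real.log_div (hs.trans_le hst).ne' hs.ne']
  · refine (ae_restrict_iff' measurableSet_Icc).2 (Filter.Eventually.of_forall ?_)
    intro u hu
    exact div_nonneg ha (hs.le.trans hu.1)

lemma main_aux (f g : ℝ → ℝ) (t : ℝ) (ht : 0 < t)
    (hg : IntegrableOn g (Set.Ioc 0 t) volume)
    (hg2 : IntegrableOn (fun u => (g u) ^ 2) (Set.Ioc 0 t) volume)
    (hle : (∫ u in Set.Ioc (0:ℝ) t, (g u) ^ 2) ≤ 1)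
    (hf : ∀ u ∈ Set.Ioc (0:ℝ) t, f u = ∫ s in Set.Ioc (0:ℝ) u, g s) :
    (∫ u in Set.Ioc (0:ℝ) t, f u / u) ≤ Real.sqrt (2 * t) := by
  obtain ⟨hLi, hLv⟩ := log_sq_aux t ht
  set c := Real.sqrt (2 * t) with hc
  have hcpos : 0 < c := Real.sqrt_pos.2 (by linarith)
  have hc2 : c ^ 2 = 2 * t := Real.sq_sqrt (by linarith)
  set μ := volume.restrict (Set.Ioc (0:ℝ) t) with hμ
  let K : ℝ → ℝ → ENNReal := fun u s =>
    Set.indicator {p : ℝ × ℝ | p.2 ≤ p.1} (fun p => ENNReal.ofReal (|g p.2| / p.1)) (u, s)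
  have hK : AEMeasurable (Function.uncurry K) (μ.prod μ) := by
    have h1 : AEMeasurable (fun p : ℝ × ℝ => g p.2) (μ.prod μ) :=
      hg.aestronglyMeasurable.aemeasurable.comp_quasiMeasurePreserving
        Measure.quasiMeasurePreserving_snd
    have h2 : AEMeasurable (fun p : ℝ × ℝ => ENNReal.ofReal (|g p.2| / p.1)) (μ.prod μ) :=
      ((measurable_norm.comp_aemeasurable h1).div measurable_fst.aemeasurable).ennreal_ofReal
    exact h2.indicator (measurableSet_le measurable_snd measurable_fst)
  have step1 : ∀ u ∈ Set.Ioc (0:ℝ) t, ENNReal.ofReal ‖f u / u‖ ≤ ∫⁻ s, K u s ∂μ := by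
    intro u hu
    have hsub : Set.Ioc (0:ℝ) u ⊆ Set.Ioc 0 t := Set.Ioc_subset_Ioc_right hu.2
    have hgu : IntegrableOn g (Set.Ioc 0 u) volume := hg.mono_set hsub
    have e : ‖f u / u‖ ≤ ∫ s in Set.Ioc (0:ℝ) u, |g s| / u := by
      rw [hf u hu, norm_div, Real.norm_of_nonneg hu.1.le, integral_div]
      exact div_le_div_of_nonneg_right (norm_integral_le_integral_norm _) hu.1.le
    refine (ENNReal.ofReal_le_ofReal e).trans ?_
    rw [ofReal_integral_eq_lintegral_ofReal (hgu.abs.div_const u)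
      (Filter.Eventually.of_forall fun s => div_nonneg (abs_nonneg _) hu.1.le)]
    calc ∫⁻ s in Set.Ioc (0:ℝ) u, ENNReal.ofReal (|g s| / u)
        = ∫⁻ s in Set.Ioc (0:ℝ) u, K u s := by
          refine setLIntegral_congr_fun measurableSet_Ioc ?_
          intro s hs
          simp [K, Set.indicator, hs.2]
      _ ≤ ∫⁻ s, K u s ∂μ := lintegral_mono_set hsub
  have step2 : ∀ s ∈ Set.Ioc (0:ℝ) t, ∫⁻ u, K u s ∂μ ≤
      ENNReal.ofReal ((c * g s ^ 2 + (Real.log t - Real.log s) ^ 2 / c) / 2) := by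
    intro s hs
    have e : ∫⁻ u, K u s ∂μ = ∫⁻ u in Set.Icc s t, ENNReal.ofReal (|g s| / u) := by
      rw [hμ, ← lintegral_indicator measurableSet_Ioc, ← lintegral_indicator measurableSet_Icc]
      congr 1
      ext u
      by_cases h : s ≤ u
      · by_cases h' : u ≤ t
        · simp [K, Set.indicator, h, h', hs.1.trans_le h]
        · simp [Set.indicator, h']
      · simp [K, Set.indicator, h]
    rw [e, inner_aux _ s t hs.1 hs.2 (abs_nonneg _)]
    refine ENNReal.ofReal_le_ofReal ?_
    set L := Real.log t - Real.log s
    have h1 : 0 ≤ (c * |g s| - L) ^ 2 / c := by positivity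
    have h2 : (c * |g s| - L) ^ 2 / c = c * |g s| ^ 2 - 2 * (|g s| * L) + L ^ 2 / c := by
      field_simp
      ring
    rw [sq_abs] at h2
    linarith
  have hint : Integrable (fun s => (c * g s ^ 2 + (Real.log t - Real.log s) ^ 2 / c) / 2) μ :=
    ((hg2.const_mul c).add (hLi.div_const c)).div_const 2
  have hval : ∫ s, (c * g s ^ 2 + (Real.log t - Real.log s) ^ 2 / c) / 2 ∂μ ≤ c := by
    rw [integral_div, integral_add (hg2.const_mul c) (hLi.div_const c), integral_const_mul,
      integral_div, hLv, ← hc2]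
    have : c ^ 2 / c = c := by field_simp
    rw [this]
    nlinarith
  have total : ∫⁻ u, ENNReal.ofReal ‖f u / u‖ ∂μ ≤ ENNReal.ofReal c :=
    calc ∫⁻ u, ENNReal.ofReal ‖f u / u‖ ∂μ ≤ ∫⁻ u, ∫⁻ s, K u s ∂μ ∂μ :=
          setLIntegral_mono' measurableSet_Ioc step1
      _ = ∫⁻ s, ∫⁻ u, K u s ∂μ ∂μ := lintegral_lintegral_swap hK
      _ ≤ ∫⁻ s, ENNReal.ofReal ((c * g s ^ 2 + (Real.log t - Real.log s) ^ 2 / c) / 2) ∂μ :=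
          setLIntegral_mono' measurableSet_Ioc step2
      _ = ENNReal.ofReal (∫ s, (c * g s ^ 2 + (Real.log t - Real.log s) ^ 2 / c) / 2 ∂μ) :=
          (ofReal_integral_eq_lintegral_ofReal hint
            (Filter.Eventually.of_forall fun s => by simp only [Pi.zero_apply]; positivity)).symm
      _ ≤ ENNReal.ofReal c := ENNReal.ofReal_le_ofReal hval
  calc (∫ u, f u / u ∂μ) ≤ ‖∫ u, f u / u ∂μ‖ := Real.le_norm_self _
    _ ≤ (∫⁻ u, ENNReal.ofReal ‖f u / u‖ ∂μ).toReal := norm_integral_le_lintegral_norm _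
    _ ≤ c := ENNReal.toReal_le_of_le_ofReal hcpos.le total

/-- For every `f` in the Strassen set and `t ∈ (0,1]`, `∫_0^t f(u)/u du ≤ √(2t)`;
in particular this integral is at most `√2` for every `t ∈ [0,1]`. -/
theorem strassenSet_integral_div_le (f : ℝ → ℝ) (hf : f ∈ StrassenSet) :
    (∀ t ∈ Set.Ioc (0:ℝ) 1, (∫ u in Set.Ioc (0:ℝ) t, f u / u) ≤ Real.sqrt (2 * t)) ∧
    (∀ t ∈ Set.Icc (0:ℝ) 1, (∫ u in Set.Ioc (0:ℝ) t, f u / u) ≤ Real.sqrt 2) := by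
  obtain ⟨g, hg, hg2, hle, hfg⟩ := hf
  have key : ∀ t ∈ Set.Ioc (0:ℝ) 1,
      (∫ u in Set.Ioc (0:ℝ) t, f u / u) ≤ Real.sqrt (2 * t) := by
    intro t ht
    have hsub : Set.Ioc (0:ℝ) t ⊆ Set.Icc 0 1 := fun x hx => ⟨hx.1.le, hx.2.trans ht.2⟩
    refine main_aux f g t ht.1 (hg.mono_set hsub) (hg2.mono_set hsub) ?_
      (fun u hu => hfg u (hsub hu))
    exact (setIntegral_mono_set hg2 (Filter.Eventually.of_forall fun s => sq_nonneg _)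
      hsub.eventuallyLE).trans hle
  refine ⟨key, ?_⟩
  intro t ht
  rcases ht.1.eq_or_lt with h | h
  · subst h
    simp
  · exact (key t ⟨h, ht.2⟩).trans (Real.sqrt_le_sqrt (by linarith [ht.2]))
end

section
/- Define f(t) = (t − t·log t)/√2 for t ∈ (0,1] and f(0) = 0, where log is the natural logarithm. Then f is absolutely continuous on [0,1] with f(0) = 0 and ∫_0^1 (f′(u))^2 du ≤ 1 (i.e., f belongs to the Strassen set F), and ∫_0^1 (f(u)/u) du = (1/√2) ∫_0^1 (1 − log u) du = √2. Consequently, sup_{f ∈ F} ∫_0^1 (f(u)/u) du ≥ √2. -/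
open MeasureTheory

lemma aux_logsq_deriv (x : ℝ) (hx : 0 < x) :
    HasDerivAt (fun u : ℝ => u * (Real.log u) ^ 2 - 2 * (u * Real.log u) + 2 * u)
      ((Real.log x) ^ 2) x := by
  have hl := Real.hasDerivAt_log hx.ne'
  have h := (((hasDerivAt_id x).mul (hl.pow 2)).sub
    (((hasDerivAt_id x).mul hl).const_mul 2)).add ((hasDerivAt_id x).const_mul 2)
  refine (h.congr_deriv ?_)
  simp
  field_simp
  ring

lemma aux_logsq_cont :
    ContinuousOn (fun u : ℝ => u * (Real.log u) ^ 2 - 2 * (u * Real.log u) + 2 * u)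
      (Set.Icc 0 1) := by
  have h1 : Continuous (fun u : ℝ => 4 * (Real.sqrt u * Real.log (Real.sqrt u)) ^ 2
      - 2 * (u * Real.log u) + 2 * u) := by
    have := Real.continuous_mul_log
    have h2 := this.comp Real.continuous_sqrt
    have h3 : Continuous fun u : ℝ => Real.sqrt u * Real.log (Real.sqrt u) := h2
    fun_prop
  refine h1.continuousOn.congr ?_
  intro u hu
  have h0 : 0 ≤ u := hu.1
  simp only [Real.log_sqrt h0, mul_pow, Real.sq_sqrt h0]
  ring

lemma aux_logsq_int : IntervalIntegrable (fun u : ℝ => (Real.log u) ^ 2) volume 0 1 := by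
  rw [intervalIntegrable_iff_integrableOn_Ioc_of_le zero_le_one]
  exact intervalIntegral.integrableOn_deriv_of_nonneg aux_logsq_cont
    (fun x hx => aux_logsq_deriv x hx.1) (fun x _ => sq_nonneg _)

lemma aux_logsq_val : ∫ u in (0:ℝ)..1, (Real.log u) ^ 2 = 2 := by
  rw [intervalIntegral.integral_eq_sub_of_hasDerivAt_of_le zero_le_one aux_logsq_cont
    (fun x hx => aux_logsq_deriv x hx.1) aux_logsq_int]
  simp

lemma aux_mem :
    (fun t : ℝ => if t = 0 then 0 else (t - t * Real.log t) / Real.sqrt 2) ∈ StrassenSet := by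
  refine ⟨fun u => (-Real.log u) / Real.sqrt 2, ?_, ?_, ?_, ?_⟩
  · rw [integrableOn_Icc_iff_integrableOn_Ioc,
      ← intervalIntegrable_iff_integrableOn_Ioc_of_le zero_le_one]
    exact (intervalIntegral.intervalIntegrable_log').neg.div_const _
  · rw [integrableOn_Icc_iff_integrableOn_Ioc,
      ← intervalIntegrable_iff_integrableOn_Ioc_of_le zero_le_one]
    simp only [div_pow, neg_sq]
    exact aux_logsq_int.div_const _
  · rw [integral_Icc_eq_integral_Ioc, ← intervalIntegral.integral_of_le zero_le_one]
    simp only [div_pow, neg_sq]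
    rw [intervalIntegral.integral_div, aux_logsq_val]
    norm_num
  · intro t ht
    rw [← intervalIntegral.integral_of_le ht.1, intervalIntegral.integral_div,
      intervalIntegral.integral_neg, integral_log]
    by_cases h : t = 0
    · simp [h]
    · simp only [h, if_false]
      simp

lemma aux_bound (f : ℝ → ℝ) (hf : f ∈ StrassenSet) (t : ℝ) (ht : t ∈ Set.Ioc (0:ℝ) 1) :
    |f t| ≤ Real.sqrt t := by
  obtain ⟨g, hg, hg2, hle, hfg⟩ := hf
  have hsub : Set.Ioc (0:ℝ) t ⊆ Set.Icc 0 1 := fun x hx => ⟨hx.1.le, hx.2.trans ht.2⟩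
  rw [hfg t ⟨ht.1.le, ht.2⟩]
  have hs : 0 < Real.sqrt t := Real.sqrt_pos.2 ht.1
  have hsq : Real.sqrt t ^ 2 = t := Real.sq_sqrt ht.1.le
  set s := Real.sqrt t with hsdef
  have hi2 : IntegrableOn (fun u => (g u) ^ 2) (Set.Ioc 0 t) volume := hg2.mono_set hsub
  have hc : IntegrableOn (fun _ : ℝ => 1 / s / 2) (Set.Ioc 0 t) volume := by
    exact integrableOn_const (by simp)
  have h1 : ∫ u in Set.Ioc (0:ℝ) t, (g u) ^ 2 ≤ 1 := by
    refine le_trans ?_ hle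
    exact setIntegral_mono_set hg2 (Filter.Eventually.of_forall fun x => sq_nonneg _)
      (Filter.Eventually.of_forall hsub)
  have h2 : ‖∫ u in Set.Ioc (0:ℝ) t, g u‖ ≤
      ∫ u in Set.Ioc (0:ℝ) t, (s / 2 * (g u) ^ 2 + 1 / s / 2) := by
    refine norm_integral_le_of_norm_le ((hi2.const_mul _).add hc) ?_
    refine Filter.Eventually.of_forall fun x => ?_
    rw [Real.norm_eq_abs]
    have : s / 2 * (g x) ^ 2 + 1 / s / 2 - |g x| = (s * |g x| - 1) ^ 2 / (2 * s) := by
      rw [← sq_abs (g x)]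
      field_simp
      ring
    have h3 : 0 ≤ (s * |g x| - 1) ^ 2 / (2 * s) := by positivity
    linarith
  rw [Real.norm_eq_abs] at h2
  refine h2.trans ?_
  rw [integral_add (hi2.const_mul _) hc, integral_const_mul, setIntegral_const]
  simp only [measureReal_def, Real.volume_Ioc, sub_zero, ENNReal.toReal_ofReal ht.1.le, smul_eq_mul]
  have h4 : t * (1 / s / 2) = s / 2 := by
    rw [← hsq]; field_simp
  rw [h4]
  nlinarith

lemma aux_bdd :
    BddAbove ((fun f : ℝ → ℝ => ∫ u in Set.Ioc (0:ℝ) 1, f u / u) '' StrassenSet) := by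
  refine ⟨∫ u in Set.Ioc (0:ℝ) 1, u ^ (-(1/2) : ℝ), ?_⟩
  rintro _ ⟨f, hf, rfl⟩
  refine (le_abs_self _).trans ?_
  rw [← Real.norm_eq_abs]
  refine norm_integral_le_of_norm_le ?_ ?_
  · have := intervalIntegral.intervalIntegrable_rpow' (a := 0) (b := 1) (r := -(1/2)) (by norm_num)
    rwa [intervalIntegrable_iff_integrableOn_Ioc_of_le zero_le_one] at this
  · refine (ae_restrict_iff' measurableSet_Ioc).2 (Filter.Eventually.of_forall fun u hu => ?_)
    have hb := aux_bound f hf u hu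
    rw [Real.norm_eq_abs, abs_div, abs_of_pos hu.1, div_le_iff₀ hu.1]
    refine hb.trans (le_of_eq ?_)
    rw [Real.sqrt_eq_rpow, ← Real.rpow_add_one hu.1.ne']
    norm_num

lemma aux_eq1 : (∫ u in Set.Ioc (0:ℝ) 1, ((u - u * Real.log u) / Real.sqrt 2) / u)
      = (1 / Real.sqrt 2) * ∫ u in Set.Ioc (0:ℝ) 1, (1 - Real.log u) := by
  rw [← integral_const_mul]
  refine setIntegral_congr_fun measurableSet_Ioc fun u hu => ?_
  have : u ≠ 0 := hu.1.ne'
  field_simp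

lemma aux_eq2 : (∫ u in Set.Ioc (0:ℝ) 1, ((u - u * Real.log u) / Real.sqrt 2) / u)
      = Real.sqrt 2 := by
  rw [aux_eq1, ← intervalIntegral.integral_of_le zero_le_one,
    intervalIntegral.integral_sub (by simp) intervalIntegral.intervalIntegrable_log',
    integral_log]
  have h : Real.sqrt 2 ^ 2 = 2 := Real.sq_sqrt (by norm_num)
  have h0 : Real.sqrt 2 ≠ 0 := by positivity
  simp
  field_simp
  norm_num

/-- The function `f(t) = (t − t·log t)/√2` (with `f(0) = 0`) belongs to the Strassen set,
`∫_0^1 f(u)/u du = (1/√2) ∫_0^1 (1 − log u) du = √2`, and consequently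
`sup_{f ∈ F} ∫_0^1 f(u)/u du ≥ √2`. -/
theorem strassenSet_integral_div_sup_ge :
    (fun t : ℝ => if t = 0 then 0 else (t - t * Real.log t) / Real.sqrt 2) ∈ StrassenSet ∧
    (∫ u in Set.Ioc (0:ℝ) 1, ((u - u * Real.log u) / Real.sqrt 2) / u)
      = (1 / Real.sqrt 2) * ∫ u in Set.Ioc (0:ℝ) 1, (1 - Real.log u) ∧
    (∫ u in Set.Ioc (0:ℝ) 1, ((u - u * Real.log u) / Real.sqrt 2) / u) = Real.sqrt 2 ∧
    Real.sqrt 2 ≤ sSup ((fun f : ℝ → ℝ => ∫ u in Set.Ioc (0:ℝ) 1, f u / u) '' StrassenSet) := by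
  refine ⟨aux_mem, aux_eq1, aux_eq2, le_csSup aux_bdd ⟨_, aux_mem, ?_⟩⟩
  refine Eq.trans ?_ aux_eq2
  refine setIntegral_congr_fun measurableSet_Ioc fun u hu => ?_
  simp [hu.1.ne']
end
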